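/- Main theorem (acute triangle case): let Ω be the triangle with vertices (0,0), (ℓ,−a₁), (ℓ,a₂) with ℓ, a₁, a₂ > 0 and let u be a smooth solution of the wave equation on Ω with Dirichlet boundary conditions. Then there is an absolute constant C (one may take C = 2√2 + √(e−1)) such that |∫₀^T∫_A |∂_ν u|² dS dt − (T/ℓ)E(0)| ≤ C·(L/ℓ)·E(0) for all T > 0, where A = {ℓ}×[−a₁,a₂], L is the length of the longest side, and E(0) is the conserved energy. -/

import Mathlib

/-!
The proof is the multiplier method with the radial field `X = x ∂_x + y ∂_y`, which is tangent to
the two sides of the triangle issuing from the origin and has constant normal component `ℓ` on the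
opposite side `A`. Real and imaginary parts of `u` are treated separately, since every quantity in
the statement is a sum over the two.

For a real solution `U` put `M U = X U + U / 2` and `e = U_t² + U_x² + U_y²`. The wave equation gives
`∂_t (U_t M U) = div (F, G) - e / 2` with an explicit field `(F, G)`. By the Dirichlet condition its
flux through the sides at the origin vanishes, and its flux density through `A` is `ℓ U_x² / 2`.
With conservation of energy this yields
`[∫ U_t M U]₀ᵀ = (ℓ / 2) ∫₀ᵀ ∫_A U_x² - (T / 2) E(0)` (`IsDirichletWave.multiplier_identity`).

To bound the left side, note `X U · U + U² / 4 = div (x U² / 2, y U² / 2) - (3 / 4) U²`, whence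
`∫ (M U)² ≤ ∫ (X U)² ≤ L² ∫ |∇U|²`, and `|∫ U_t M U| ≤ L E(0) / 2`
(`IsDirichletWave.abs_multiplier_le`). So the claim holds even with the constant `2`.

The divergence theorem on the triangle (`divergence_tri`) comes from the one on a rectangle through
the coordinates `(x, s)`, `y = s x`, by means of the transformed field `(x F, G - s F)`.
-/

open MeasureTheory intervalIntegral

/-! ### Integration over the triangle -/

/-- The closed triangle cut out of the strip `0 ≤ x ≤ ℓ` by the lines `y = a x` and `y = b x`. -/
def tri (ℓ a b : ℝ) : Set (ℝ × ℝ) :=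
  {p | 0 ≤ p.1 ∧ p.1 ≤ ℓ ∧ a * p.1 ≤ p.2 ∧ p.2 ≤ b * p.1}

/-- The directional derivative of a function on space-time along `v`. Points are `(t, x, y)`, so
`(1, 0, 0)`, `(0, 1, 0)` and `(0, 0, 1)` give `∂_t`, `∂_x` and `∂_y`. -/
noncomputable def pd {E : Type*} [NormedAddCommGroup E] [NormedSpace ℝ E] (v : ℝ × ℝ × ℝ)
    (f : ℝ × ℝ × ℝ → E) (q : ℝ × ℝ × ℝ) : E :=
  fderiv ℝ f q v

theorem isClosed_tri (ℓ a b : ℝ) : IsClosed (tri ℓ a b) := by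
  exact (isClosed_le continuous_const continuous_fst).inter
    ((isClosed_le continuous_fst continuous_const).inter
      ((isClosed_le (continuous_const.mul continuous_fst) continuous_snd).inter
        (isClosed_le continuous_snd (continuous_const.mul continuous_fst))))

theorem isCompact_tri (ℓ a b : ℝ) : IsCompact (tri ℓ a b) := by
  refine ((isCompact_Icc (a := (0:ℝ)) (b := ℓ)).prod
    (isCompact_Icc (a := -(|a| * ℓ)) (b := |b| * ℓ))).of_isClosed_subset (isClosed_tri ℓ a b) ?_
  rintro ⟨x, y⟩ ⟨h1, h2, h3, h4⟩
  simp only at h1 h2 h3 h4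
  refine ⟨⟨h1, h2⟩, ?_, ?_⟩
  · simp only
    have := neg_abs_le a
    nlinarith [abs_nonneg a]
  · simp only
    have := le_abs_self b
    nlinarith [abs_nonneg b]

theorem integrableOn_tri {ℓ a b : ℝ} {f : ℝ × ℝ → ℝ} (hf : Continuous f) :
    IntegrableOn f (tri ℓ a b) :=
  hf.continuousOn.integrableOn_compact (isCompact_tri ℓ a b)

/-- Integration over the triangle in the coordinates `(x, s)` with `y = s x`, whose Jacobian is `x`. -/
theorem setIntegral_tri {ℓ a b : ℝ} (hℓ : 0 ≤ ℓ) (hab : a ≤ b) {f : ℝ × ℝ → ℝ}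
    (hf : Continuous f) :
    ∫ p in tri ℓ a b, f p = ∫ x in (0 : ℝ)..ℓ, ∫ s in a..b, x * f (x, s * x) := by
  have hm := (isClosed_tri ℓ a b).measurableSet
  rw [← MeasureTheory.integral_indicator hm, Measure.volume_eq_prod, integral_prod _
    ((integrable_indicator_iff hm).2 (integrableOn_tri hf)), integral_of_le hℓ,
    ← integral_Icc_eq_integral_Ioc, ← MeasureTheory.integral_indicator measurableSet_Icc]
  refine integral_congr_ae (ae_of_all _ fun x => ?_)
  by_cases hx : x ∈ Set.Icc 0 ℓ
  · have hle : a * x ≤ b * x := mul_le_mul_of_nonneg_right hab hx.1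
    simp only [Set.indicator_of_mem hx]
    rw [intervalIntegral.integral_const_mul,
      intervalIntegral.mul_integral_comp_mul_right (f := fun y => f (x, y)), integral_of_le hle,
      ← integral_Icc_eq_integral_Ioc, ← MeasureTheory.integral_indicator measurableSet_Icc]
    congr 1
    ext y
    simp only [Set.indicator, tri, Set.mem_ofPred_eq, Set.mem_Icc]
    simp [hx.1, hx.2]
  · simp only [Set.indicator_of_notMem hx]
    have : ∀ y, (tri ℓ a b).indicator f (x, y) = 0 := fun y =>
      Set.indicator_of_notMem (fun h => hx ⟨h.1, h.2.1⟩) _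
    simp [this]

/-- The divergence theorem on the triangle at a fixed time, for a field tangent to the two sides
through the origin: only the flux through the side `x = ℓ` is left. -/
theorem divergence_tri {ℓ a b : ℝ} (hℓ : 0 ≤ ℓ) (hab : a ≤ b) {F G : ℝ × ℝ × ℝ → ℝ}
    (hF : ContDiff ℝ 1 F) (hG : ContDiff ℝ 1 G) (t : ℝ)
    (ha : ∀ x ∈ Set.Icc 0 ℓ, G (t, x, a * x) = a * F (t, x, a * x))
    (hb : ∀ x ∈ Set.Icc 0 ℓ, G (t, x, b * x) = b * F (t, x, b * x)) :
    ∫ p in tri ℓ a b, (pd (0, 1, 0) F (t, p) + pd (0, 0, 1) G (t, p))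
      = ∫ y in (a * ℓ)..(b * ℓ), F (t, ℓ, y) := by
  have hcF : Continuous (fun q => fderiv ℝ F q) := hF.continuous_fderiv one_ne_zero
  have hcG : Continuous (fun q => fderiv ℝ G q) := hG.continuous_fderiv one_ne_zero
  rw [setIntegral_tri hℓ hab (by unfold pd; fun_prop)]
  let Φ : ℝ × ℝ → ℝ × ℝ × ℝ := fun p => (t, p.1, p.2 * p.1)
  have hΦ : ∀ p, HasFDerivAt Φ ((0 : ℝ × ℝ →L[ℝ] ℝ).prod ((ContinuousLinearMap.fst ℝ ℝ ℝ).prod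
      (p.2 • ContinuousLinearMap.fst ℝ ℝ ℝ + p.1 • ContinuousLinearMap.snd ℝ ℝ ℝ))) p := fun p =>
    (hasFDerivAt_const _ _).prodMk (hasFDerivAt_fst.prodMk (hasFDerivAt_snd.mul hasFDerivAt_fst))
  have hΦc : ContDiff ℝ 1 Φ := by fun_prop
  let f : ℝ × ℝ → ℝ := fun p => p.1 * F (Φ p)
  let g : ℝ × ℝ → ℝ := fun p => G (Φ p) - p.2 * F (Φ p)
  have hf : ContDiff ℝ 1 f := contDiff_fst.mul (hF.comp hΦc)
  have hg : ContDiff ℝ 1 g := (hG.comp hΦc).sub (contDiff_snd.mul (hF.comp hΦc))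
  have hdF : ∀ q, HasFDerivAt F (fderiv ℝ F q) q := fun q =>
    (hF.differentiable one_ne_zero q).hasFDerivAt
  have hdG : ∀ q, HasFDerivAt G (fderiv ℝ G q) q := fun q =>
    (hG.differentiable one_ne_zero q).hasFDerivAt
  have key := integral2_divergence_prod_of_hasFDerivAt_off_countable f g (fderiv ℝ f) (fderiv ℝ g)
    0 a ℓ b ∅ Set.countable_empty hf.continuous.continuousOn hg.continuous.continuousOn
    (fun x _ => (hf.differentiable one_ne_zero x).hasFDerivAt)
    (fun x _ => (hg.differentiable one_ne_zero x).hasFDerivAt)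
    (ContinuousOn.integrableOn_compact (isCompact_uIcc.prod isCompact_uIcc)
      (Continuous.continuousOn (by
        have := hf.continuous_fderiv one_ne_zero
        have := hg.continuous_fderiv one_ne_zero
        fun_prop)))
  -- Piola identity: the transformed field has divergence equal to the Jacobian times the original one.
  have hint : ∀ x s, fderiv ℝ f (x, s) (1, 0) + fderiv ℝ g (x, s) (0, 1)
      = x * (pd (0, 1, 0) F (t, x, s * x) + pd (0, 0, 1) G (t, x, s * x)) := by
    intro x s
    have h1 := (hasFDerivAt_fst (𝕜 := ℝ) (p := (x, s))).mul ((hdF (Φ (x, s))).comp (x, s) (hΦ (x, s)))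
    have h2 := ((hdG (Φ (x, s))).comp (x, s) (hΦ (x, s))).sub
      ((hasFDerivAt_snd (𝕜 := ℝ) (p := (x, s))).mul ((hdF (Φ (x, s))).comp (x, s) (hΦ (x, s))))
    rw [show fderiv ℝ f (x, s) = _ from h1.fderiv, show fderiv ℝ g (x, s) = _ from h2.fderiv]
    have e1 : ((0, 1, s) : ℝ × ℝ × ℝ) = (0, 1, 0) + s • (0, 0, 1) := by simp
    have e2 : ((0, 0, x) : ℝ × ℝ × ℝ) = x • (0, 0, 1) := by simp
    simp [pd, Φ]
    rw [e1, e2]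
    simp only [map_add, map_smul, smul_eq_mul]
    ring
  simp only [hint] at key
  rw [key]
  have z : ∀ c, (∀ x ∈ Set.Icc 0 ℓ, G (t, x, c * x) = c * F (t, x, c * x)) →
      ∫ x in (0 : ℝ)..ℓ, g (x, c) = 0 := by
    intro c hc
    refine (intervalIntegral.integral_congr (g := fun _ => 0) fun x hx => ?_).trans (by simp)
    rw [Set.uIcc_of_le hℓ] at hx
    simp [g, Φ, hc x hx]
  rw [z a ha, z b hb]
  simp only [f, Φ]
  rw [intervalIntegral.integral_const_mul,
      intervalIntegral.mul_integral_comp_mul_right (f := fun y => F (t, ℓ, y))]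
  simp

/-- The fundamental theorem of calculus in time, integrated over the triangle and combined with Fubini. -/
theorem integral_time_derivative {ℓ a b : ℝ} {n : ℝ × ℝ × ℝ → ℝ} (hn : ContDiff ℝ 1 n) (T : ℝ) :
    (∫ p in tri ℓ a b, n (T, p)) - ∫ p in tri ℓ a b, n (0, p)
      = ∫ t in (0 : ℝ)..T, ∫ p in tri ℓ a b, pd (1, 0, 0) n (t, p) := by
  have hc : Continuous (fun q => pd (1, 0, 0) n q) := by
    have := hn.continuous_fderiv one_ne_zero
    unfold pd; fun_prop
  have hnc := hn.continuous
  rw [intervalIntegral_integral_swap, ← integral_sub (integrableOn_tri (by fun_prop))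
    (integrableOn_tri (by fun_prop))]
  · refine integral_congr_ae (ae_of_all _ fun p => ?_)
    simp only
    rw [integral_eq_sub_of_hasDerivAt (f := fun t => n (t, p))]
    · intro t _
      exact ((hn.differentiable one_ne_zero (t, p)).hasFDerivAt).comp_hasDerivAt t
        ((hasDerivAt_id t).prodMk (hasDerivAt_const t p))
    · exact Continuous.intervalIntegrable (by fun_prop) _ _
  · rw [Measure.prod_restrict, ← Measure.volume_eq_prod]
    refine IntegrableOn.mono_set ?_ (Set.prod_mono Set.uIoc_subset_uIcc subset_rfl)
    exact hc.continuousOn.integrableOn_compact (isCompact_uIcc.prod (isCompact_tri ℓ a b))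

/-! ### Calculus of directional derivatives -/

section Calculus
variable {E : Type*} [NormedAddCommGroup E] [NormedSpace ℝ E]

theorem contDiff_pd {f : ℝ × ℝ × ℝ → E} (hf : ContDiff ℝ (⊤ : ℕ∞) f) (v : ℝ × ℝ × ℝ) :
    ContDiff ℝ (⊤ : ℕ∞) (pd v f) :=
  (hf.fderiv_right (m := (⊤ : ℕ∞)) (by simp)).clm_apply contDiff_const

theorem pd_comm {f : ℝ × ℝ × ℝ → E} (hf : ContDiff ℝ (⊤ : ℕ∞) f) (v w : ℝ × ℝ × ℝ) :
    pd v (pd w f) = pd w (pd v f) := by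
  ext q
  have hd : DifferentiableAt ℝ (fderiv ℝ f) q :=
    (hf.fderiv_right (m := 1) (by norm_cast)).differentiable one_ne_zero q
  have h : ∀ w, pd w f = fun q => fderiv ℝ f q w := fun _ => rfl
  have hsym := second_derivative_symmetric
    (fun y => (hf.differentiable (by simp) y).hasFDerivAt) hd.hasFDerivAt v w
  have e : ∀ v w, pd v (pd w f) q = fderiv ℝ (fderiv ℝ f) q v w := by
    intro v w
    rw [h w]
    unfold pd
    rw [fderiv_clm_apply hd (differentiableAt_const w)]
    simp
  rw [e, e, hsym]

theorem deriv_comp_eq_pd {f : ℝ × ℝ × ℝ → E} (hf : Differentiable ℝ f) {γ : ℝ → ℝ × ℝ × ℝ}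
    {v : ℝ × ℝ × ℝ} {s : ℝ} (hγ : HasDerivAt γ v s) :
    deriv (fun r => f (γ r)) s = pd v f (γ s) :=
  ((hf (γ s)).hasFDerivAt.comp_hasDerivAt s hγ).deriv

/-- A function vanishing along a curve has zero derivative in the direction of the curve; end points
of the parameter interval are included. -/
theorem pd_eq_zero_of_curve {f : ℝ × ℝ × ℝ → E} (hf : Differentiable ℝ f) {γ : ℝ → ℝ × ℝ × ℝ}
    {v : ℝ × ℝ × ℝ} {s c d : ℝ} (hcd : c < d) (hs : s ∈ Set.Icc c d) (hγ : HasDerivAt γ v s)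
    (h0 : ∀ r ∈ Set.Icc c d, f (γ r) = 0) : pd v f (γ s) = 0 := by
  have h1 := ((hf (γ s)).hasFDerivAt.comp_hasDerivAt s hγ).hasDerivWithinAt (s := Set.Icc c d)
  have h2 : HasDerivWithinAt (f ∘ γ) 0 (Set.Icc c d) s :=
    (hasDerivWithinAt_const s _ (0 : E)).congr h0 (h0 s hs)
  exact (uniqueDiffOn_Icc hcd s hs).eq_deriv _ h1 h2

variable (v : ℝ × ℝ × ℝ) {f g : ℝ × ℝ × ℝ → ℝ} (q : ℝ × ℝ × ℝ)

theorem pd_mul (hf : Differentiable ℝ f) (hg : Differentiable ℝ g) :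
    pd v (fun q => f q * g q) q = pd v f q * g q + f q * pd v g q := by
  unfold pd
  rw [fderiv_fun_mul (hf q) (hg q)]
  simp
  ring

theorem pd_add (hf : Differentiable ℝ f) (hg : Differentiable ℝ g) :
    pd v (fun q => f q + g q) q = pd v f q + pd v g q := by
  unfold pd
  rw [fderiv_fun_add (hf q) (hg q)]
  simp

theorem pd_sub (hf : Differentiable ℝ f) (hg : Differentiable ℝ g) :
    pd v (fun q => f q - g q) q = pd v f q - pd v g q := by
  unfold pd
  rw [fderiv_fun_sub (hf q) (hg q)]
  simp

theorem pd_sq (hf : Differentiable ℝ f) :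
    pd v (fun q => f q ^ 2) q = 2 * (f q * pd v f q) := by
  simp only [pow_two]
  rw [pd_mul v q hf hf]
  ring

theorem pd_const_mul (c : ℝ) (hf : Differentiable ℝ f) :
    pd v (fun q => c * f q) q = c * pd v f q := by
  unfold pd
  rw [fderiv_const_mul (hf q)]
  simp

theorem pd_x : pd v (fun q => q.2.1) q = v.2.1 := by
  unfold pd
  rw [show fderiv ℝ (fun q : ℝ × ℝ × ℝ => q.2.1) q = _ from (hasFDerivAt_snd.fst).fderiv]
  simp

theorem pd_y : pd v (fun q => q.2.2) q = v.2.2 := by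
  unfold pd
  rw [show fderiv ℝ (fun q : ℝ × ℝ × ℝ => q.2.2) q = _ from (hasFDerivAt_snd.snd).fderiv]
  simp

end Calculus

/-! ### Real solutions: energy conservation and the radial multiplier -/

section Wave
variable {ℓ a b : ℝ} {U : ℝ × ℝ × ℝ → ℝ}

/-- The energy density `U_t² + U_x² + U_y²`, without a factor `1 / 2`. -/
noncomputable def energyDensity (U : ℝ × ℝ × ℝ → ℝ) (q : ℝ × ℝ × ℝ) : ℝ :=
  pd (1, 0, 0) U q ^ 2 + (pd (0, 1, 0) U q ^ 2 + pd (0, 0, 1) U q ^ 2)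

/-- The multiplier `x U_x + y U_y + U / 2`. -/
noncomputable def multiplier (U : ℝ × ℝ × ℝ → ℝ) (q : ℝ × ℝ × ℝ) : ℝ :=
  q.2.1 * pd (0, 1, 0) U q + (q.2.2 * pd (0, 0, 1) U q + (1 / 2) * U q)

/-- `U` is a smooth function on space-time which solves the wave equation over the closed triangle
`tri ℓ a b` for all times and vanishes on its three sides. -/
structure IsDirichletWave (ℓ a b : ℝ) (U : ℝ × ℝ × ℝ → ℝ) : Prop where
  smooth : ContDiff ℝ (⊤ : ℕ∞) U
  wave : ∀ t, ∀ p ∈ tri ℓ a b, pd (1, 0, 0) (pd (1, 0, 0) U) (t, p)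
    = pd (0, 1, 0) (pd (0, 1, 0) U) (t, p) + pd (0, 0, 1) (pd (0, 0, 1) U) (t, p)
  lower : ∀ t, ∀ x ∈ Set.Icc 0 ℓ, U (t, x, a * x) = 0
  upper : ∀ t, ∀ x ∈ Set.Icc 0 ℓ, U (t, x, b * x) = 0
  side : ∀ t, ∀ y ∈ Set.Icc (a * ℓ) (b * ℓ), U (t, ℓ, y) = 0

namespace IsDirichletWave

theorem differentiable (h : IsDirichletWave ℓ a b U) : Differentiable ℝ U :=
  h.smooth.differentiable (by simp)

theorem contDiff_pd_one (h : IsDirichletWave ℓ a b U) (v : ℝ × ℝ × ℝ) : ContDiff ℝ 1 (pd v U) :=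
  (contDiff_pd h.smooth v).of_le (by norm_cast)

theorem contDiff_one (h : IsDirichletWave ℓ a b U) : ContDiff ℝ 1 U :=
  h.smooth.of_le (by norm_cast)

theorem pd_time_eq_zero (h : IsDirichletWave ℓ a b U) {p : ℝ × ℝ} (hp : ∀ t, U (t, p) = 0) (t : ℝ) :
    pd (1, 0, 0) U (t, p) = 0 :=
  pd_eq_zero_of_curve (γ := fun t => (t, p)) h.differentiable (lt_add_one t)
    ⟨le_rfl, (lt_add_one t).le⟩ ((hasDerivAt_id t).prodMk (hasDerivAt_const t p))
    (fun r _ => hp r)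

/-- On a side through the origin where `U` vanishes, the derivative along the side vanishes. -/
theorem pd_radial_eq_zero (h : IsDirichletWave ℓ a b U) (hℓ : 0 < ℓ) {c : ℝ} {t : ℝ}
    (hc : ∀ x ∈ Set.Icc 0 ℓ, U (t, x, c * x) = 0) {x : ℝ} (hx : x ∈ Set.Icc 0 ℓ) :
    pd (0, 1, 0) U (t, x, c * x) + c * pd (0, 0, 1) U (t, x, c * x) = 0 := by
  have := pd_eq_zero_of_curve (γ := fun x => (t, x, c * x)) h.differentiable hℓ hx
    ((hasDerivAt_const x t).prodMk ((hasDerivAt_id x).prodMk ((hasDerivAt_id x).const_mul c))) hc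
  have e : ((0, 1, c * 1) : ℝ × ℝ × ℝ) = (0, 1, 0) + c • (0, 0, 1) := by simp
  rw [e] at this
  simpa only [pd, map_add, map_smul, smul_eq_mul] using this

theorem pd_tangential_eq_zero (h : IsDirichletWave ℓ a b U) (hℓ : 0 < ℓ) (hab : a < b) (t : ℝ)
    {y : ℝ} (hy : y ∈ Set.Icc (a * ℓ) (b * ℓ)) : pd (0, 0, 1) U (t, ℓ, y) = 0 :=
  pd_eq_zero_of_curve (γ := fun y => (t, ℓ, y)) h.differentiable
    (mul_lt_mul_of_pos_right hab hℓ) hy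
    ((hasDerivAt_const y t).prodMk ((hasDerivAt_const y ℓ).prodMk (hasDerivAt_id y))) (h.side t)

/-- Conservation of energy: the energy density satisfies `∂_t e = div (2 U_t ∇U)`, and `U_t = 0` on
the boundary. -/
theorem energy_eq (h : IsDirichletWave ℓ a b U) (hℓ : 0 < ℓ) (hab : a < b) (T : ℝ) :
    ∫ p in tri ℓ a b, energyDensity U (T, p) = ∫ p in tri ℓ a b, energyDensity U (0, p) := by
  have c0 := h.contDiff_pd_one (1, 0, 0)
  have c1 := h.contDiff_pd_one (0, 1, 0)
  have c2 := h.contDiff_pd_one (0, 0, 1)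
  have d0 := c0.differentiable one_ne_zero
  have d1 := c1.differentiable one_ne_zero
  have d2 := c2.differentiable one_ne_zero
  have h1 := integral_time_derivative (ℓ := ℓ) (a := a) (b := b) (n := energyDensity U)
    (by unfold energyDensity; fun_prop) T
  have h2 : ∀ t, ∫ p in tri ℓ a b, pd (1, 0, 0) (energyDensity U) (t, p) = 0 := by
    intro t
    have hdiv := divergence_tri hℓ.le hab.le
      (F := fun q => 2 * (pd (1, 0, 0) U q * pd (0, 1, 0) U q))
      (G := fun q => 2 * (pd (1, 0, 0) U q * pd (0, 0, 1) U q)) (by fun_prop) (by fun_prop) t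
      (fun x hx => by simp [h.pd_time_eq_zero (fun t => h.lower t x hx)])
      (fun x hx => by simp [h.pd_time_eq_zero (fun t => h.upper t x hx)])
    have hside : ∫ y in (a * ℓ)..(b * ℓ), 2 * (pd (1, 0, 0) U (t, ℓ, y) * pd (0, 1, 0) U (t, ℓ, y))
        = 0 := by
      refine (intervalIntegral.integral_congr (g := fun _ => 0) fun y hy => ?_).trans (by simp)
      rw [Set.uIcc_of_le (mul_le_mul_of_nonneg_right hab.le hℓ.le)] at hy
      simp [h.pd_time_eq_zero (fun t => h.side t y hy)]
    rw [hside] at hdiv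
    refine Eq.trans ?_ hdiv
    refine setIntegral_congr_fun (isClosed_tri ℓ a b).measurableSet fun p hp => ?_
    unfold energyDensity
    simp (disch := fun_prop) only [pd_add, pd_sq, pd_const_mul, pd_mul]
    rw [h.wave t p hp, pd_comm h.smooth (1, 0, 0) (0, 1, 0), pd_comm h.smooth (1, 0, 0) (0, 0, 1)]
    ring
  simp only [h2] at h1
  simpa [sub_eq_zero] using h1

/-- The multiplier identity, from
`∂_t (U_t M U) = div (M U ∇U + (U_t² - |∇U|²) (x, y) / 2) - e / 2` with `M U = x U_x + y U_y + U / 2`. -/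
theorem multiplier_identity (h : IsDirichletWave ℓ a b U) (hℓ : 0 < ℓ) (hab : a < b) (T : ℝ) :
    (∫ p in tri ℓ a b, pd (1, 0, 0) U (T, p) * multiplier U (T, p))
      - ∫ p in tri ℓ a b, pd (1, 0, 0) U (0, p) * multiplier U (0, p)
      = (ℓ / 2) * (∫ t in (0 : ℝ)..T, ∫ y in (a * ℓ)..(b * ℓ), pd (0, 1, 0) U (t, ℓ, y) ^ 2)
        - (T / 2) * ∫ p in tri ℓ a b, energyDensity U (0, p) := by
  have c := h.contDiff_one
  have c0 := h.contDiff_pd_one (1, 0, 0)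
  have c1 := h.contDiff_pd_one (0, 1, 0)
  have c2 := h.contDiff_pd_one (0, 0, 1)
  have d := c.differentiable one_ne_zero
  have d0 := c0.differentiable one_ne_zero
  have d1 := c1.differentiable one_ne_zero
  have d2 := c2.differentiable one_ne_zero
  have hcm : ContDiff ℝ 1 (multiplier U) := by unfold multiplier; fun_prop
  have hdm := hcm.differentiable one_ne_zero
  have hce : Continuous (energyDensity U) := by
    have := c0.continuous
    have := c1.continuous
    have := c2.continuous
    unfold energyDensity; fun_prop
  rw [integral_time_derivative (n := fun q => pd (1, 0, 0) U q * multiplier U q) (by fun_prop) T]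
  have h2 : ∀ t, ∫ p in tri ℓ a b,
      pd (1, 0, 0) (fun q => pd (1, 0, 0) U q * multiplier U q) (t, p)
      = (ℓ / 2) * (∫ y in (a * ℓ)..(b * ℓ), pd (0, 1, 0) U (t, ℓ, y) ^ 2)
        - (1 / 2) * ∫ p in tri ℓ a b, energyDensity U (0, p) := by
    intro t
    let F : ℝ × ℝ × ℝ → ℝ := fun q => pd (0, 1, 0) U q * multiplier U q
      + (1 / 2) * (q.2.1 * (pd (1, 0, 0) U q ^ 2 - (pd (0, 1, 0) U q ^ 2 + pd (0, 0, 1) U q ^ 2)))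
    let G : ℝ × ℝ × ℝ → ℝ := fun q => pd (0, 0, 1) U q * multiplier U q
      + (1 / 2) * (q.2.2 * (pd (1, 0, 0) U q ^ 2 - (pd (0, 1, 0) U q ^ 2 + pd (0, 0, 1) U q ^ 2)))
    have hF : ContDiff ℝ 1 F := by fun_prop
    have hG : ContDiff ℝ 1 G := by fun_prop
    have hflux : ∀ c, (∀ t, ∀ x ∈ Set.Icc 0 ℓ, U (t, x, c * x) = 0) →
        ∀ x ∈ Set.Icc 0 ℓ, G (t, x, c * x) = c * F (t, x, c * x) := by
      intro c hc x hx
      have hm : multiplier U (t, x, c * x) = 0 := by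
        have := h.pd_radial_eq_zero hℓ (hc t) hx
        simp only [multiplier, hc t x hx]
        linear_combination x * this
      simp only [F, G, hm]
      ring
    have hdiv := divergence_tri hℓ.le hab.le hF hG t (hflux a h.lower) (hflux b h.upper)
    have hside : ∫ y in (a * ℓ)..(b * ℓ), F (t, ℓ, y)
        = (ℓ / 2) * ∫ y in (a * ℓ)..(b * ℓ), pd (0, 1, 0) U (t, ℓ, y) ^ 2 := by
      rw [← intervalIntegral.integral_const_mul]
      refine intervalIntegral.integral_congr fun y hy => ?_
      rw [Set.uIcc_of_le (mul_le_mul_of_nonneg_right hab.le hℓ.le)] at hy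
      simp only [F, multiplier, h.pd_time_eq_zero (fun t => h.side t y hy),
        h.pd_tangential_eq_zero hℓ hab t hy, h.side t y hy]
      ring
    have hsplit : ∫ p in tri ℓ a b,
        pd (1, 0, 0) (fun q => pd (1, 0, 0) U q * multiplier U q) (t, p)
        = ∫ p in tri ℓ a b, ((pd (0, 1, 0) F (t, p) + pd (0, 0, 1) G (t, p))
          - (1 / 2) * energyDensity U (t, p)) := by
      refine setIntegral_congr_fun (isClosed_tri ℓ a b).measurableSet fun p hp => ?_
      simp only [F, G]
      unfold multiplier energyDensity
      simp (disch := fun_prop) only [pd_add, pd_sub, pd_sq, pd_const_mul, pd_mul, pd_x, pd_y]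
      rw [h.wave t p hp, pd_comm h.smooth (1, 0, 0) (0, 1, 0), pd_comm h.smooth (1, 0, 0) (0, 0, 1),
        pd_comm h.smooth (0, 0, 1) (0, 1, 0)]
      ring
    have hcF := hF.continuous_fderiv one_ne_zero
    have hcG := hG.continuous_fderiv one_ne_zero
    rw [hsplit, integral_sub (integrableOn_tri (by unfold pd; fun_prop))
      (integrableOn_tri (by fun_prop)), hdiv, hside, MeasureTheory.integral_const_mul,
      h.energy_eq hℓ hab t]
  simp only [h2]
  have hc1 := c1.continuous
  rw [intervalIntegral.integral_sub, intervalIntegral.integral_const_mul]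
  · simp
    ring
  · apply Continuous.intervalIntegrable
    refine continuous_const.mul ?_
    exact intervalIntegral.continuous_parametric_intervalIntegral_of_continuous' (by fun_prop) _ _
  · simp

/-- Integrate the pointwise bound
`± 2 L U_t M U ≤ L² U_t² + (M U)² ≤ L² e + div (x U² / 2, y U² / 2)` for `M U = x U_x + y U_y + U / 2`;
the divergence has integral zero because `U` vanishes on the boundary. -/
theorem abs_multiplier_le (h : IsDirichletWave ℓ a b U) (hℓ : 0 < ℓ) (hab : a < b) {L : ℝ}
    (hL : 0 < L) (hLtri : ∀ p ∈ tri ℓ a b, p.1 ^ 2 + p.2 ^ 2 ≤ L ^ 2) (t : ℝ) :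
    |∫ p in tri ℓ a b, pd (1, 0, 0) U (t, p) * multiplier U (t, p)|
      ≤ (L / 2) * ∫ p in tri ℓ a b, energyDensity U (0, p) := by
  have c := h.contDiff_one
  have c0 := h.contDiff_pd_one (1, 0, 0)
  have c1 := h.contDiff_pd_one (0, 1, 0)
  have c2 := h.contDiff_pd_one (0, 0, 1)
  have d := c.differentiable one_ne_zero
  have hm : Continuous (multiplier U) :=
    ContDiff.continuous (𝕜 := ℝ) (n := 1) (by unfold multiplier; fun_prop)
  have he : Continuous (energyDensity U) :=
    ContDiff.continuous (𝕜 := ℝ) (n := 1) (by unfold energyDensity; fun_prop)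
  have hc0 := c0.continuous
  let F : ℝ × ℝ × ℝ → ℝ := fun q => (1 / 2) * (q.2.1 * U q ^ 2)
  let G : ℝ × ℝ × ℝ → ℝ := fun q => (1 / 2) * (q.2.2 * U q ^ 2)
  have hF : ContDiff ℝ 1 F := by fun_prop
  have hG : ContDiff ℝ 1 G := by fun_prop
  have hcF := hF.continuous_fderiv one_ne_zero
  have hcG := hG.continuous_fderiv one_ne_zero
  have hdiv := divergence_tri hℓ.le hab.le hF hG t
    (fun x hx => by simp [F, G, h.lower t x hx]) (fun x hx => by simp [F, G, h.upper t x hx])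
  have hside : ∫ y in (a * ℓ)..(b * ℓ), F (t, ℓ, y) = 0 := by
    refine (intervalIntegral.integral_congr (g := fun _ => 0) fun y hy => ?_).trans (by simp)
    rw [Set.uIcc_of_le (mul_le_mul_of_nonneg_right hab.le hℓ.le)] at hy
    simp [F, h.side t y hy]
  rw [hside] at hdiv
  -- `σ` is a sign: both signs are needed for the absolute value.
  have key : ∀ σ : ℝ, σ ^ 2 = 1 →
      (2 * L * σ) * ∫ p in tri ℓ a b, pd (1, 0, 0) U (t, p) * multiplier U (t, p)
        ≤ L ^ 2 * ∫ p in tri ℓ a b, energyDensity U (0, p) := by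
    intro σ hσ
    have hsum : L ^ 2 * ∫ p in tri ℓ a b, energyDensity U (0, p)
        = ∫ p in tri ℓ a b, (L ^ 2 * energyDensity U (t, p)
          + (pd (0, 1, 0) F (t, p) + pd (0, 0, 1) G (t, p))) := by
      rw [integral_add (integrableOn_tri (by fun_prop)) (integrableOn_tri (by unfold pd; fun_prop)),
        hdiv, add_zero, MeasureTheory.integral_const_mul, h.energy_eq hℓ hab t]
    rw [hsum, ← MeasureTheory.integral_const_mul]
    refine setIntegral_mono_on (integrableOn_tri (by fun_prop))
      (integrableOn_tri (by unfold pd; fun_prop)) (isClosed_tri ℓ a b).measurableSet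
      fun p hp => ?_
    have hp2 := hLtri p hp
    simp only [F, G]
    unfold multiplier energyDensity
    simp (disch := fun_prop) only [pd_sq, pd_const_mul, pd_mul, pd_x, pd_y]
    generalize pd (1, 0, 0) U (t, p) = ut
    generalize pd (0, 1, 0) U (t, p) = ux
    generalize pd (0, 0, 1) U (t, p) = uy
    generalize U (t, p) = w
    have i1 : 0 ≤ (L ^ 2 - (p.1 ^ 2 + p.2 ^ 2)) * (ux ^ 2 + uy ^ 2) :=
      mul_nonneg (by linarith) (by positivity)
    have i2 := sq_nonneg (σ * L * ut - (p.1 * ux + (p.2 * uy + 1 / 2 * w)))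
    -- Cauchy-Schwarz for `x U_x + y U_y`.
    have i3 := sq_nonneg (p.1 * uy - p.2 * ux)
    have i4 : (σ * L * ut) ^ 2 = L ^ 2 * ut ^ 2 := by rw [mul_pow, mul_pow, hσ]; ring
    have i5 := sq_nonneg w
    nlinarith
  have k1 := key 1 (by norm_num)
  have k2 := key (-1) (by norm_num)
  rw [abs_le]
  constructor
  · refine le_of_mul_le_mul_left ?_ (mul_pos two_pos hL)
    linarith
  · refine le_of_mul_le_mul_left ?_ (mul_pos two_pos hL)
    linarith

/-- The observability estimate for real solutions, with the constant `2`. -/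
theorem observability (h : IsDirichletWave ℓ a b U) (hℓ : 0 < ℓ) (hab : a < b) {L : ℝ}
    (hL : 0 < L) (hLtri : ∀ p ∈ tri ℓ a b, p.1 ^ 2 + p.2 ^ 2 ≤ L ^ 2) (T : ℝ) :
    |(∫ t in (0 : ℝ)..T, ∫ y in (a * ℓ)..(b * ℓ), pd (0, 1, 0) U (t, ℓ, y) ^ 2)
        - (T / ℓ) * ∫ p in tri ℓ a b, energyDensity U (0, p)|
      ≤ 2 * (L / ℓ) * ∫ p in tri ℓ a b, energyDensity U (0, p) := by
  have h1 := h.multiplier_identity hℓ hab T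
  have h2 := abs_le.1 (h.abs_multiplier_le hℓ hab hL hLtri T)
  have h3 := abs_le.1 (h.abs_multiplier_le hℓ hab hL hLtri 0)
  generalize (∫ p in tri ℓ a b, energyDensity U (0, p)) = E at *
  generalize (∫ t in (0 : ℝ)..T, ∫ y in (a * ℓ)..(b * ℓ), pd (0, 1, 0) U (t, ℓ, y) ^ 2) = B at *
  have e : B - T / ℓ * E = (2 / ℓ) * ((ℓ / 2) * B - (T / 2) * E) := by field_simp
  have e2 : 2 * (L / ℓ) * E = (2 / ℓ) * (L * E) := by field_simp
  rw [e, e2, ← h1, abs_mul, abs_of_pos (by positivity : 0 < 2 / ℓ)]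
  refine mul_le_mul_of_nonneg_left ?_ (by positivity)
  rw [abs_le]
  constructor <;> linarith [h2.1, h2.2, h3.1, h3.2]

end IsDirichletWave

end Wave

/-! ### From complex to real solutions -/

/-- A point of the triangle that every positive step in direction `d` leaves lies on the frontier. -/
theorem mem_frontier_tri {ℓ a b : ℝ} {p d : ℝ × ℝ} (hp : p ∈ tri ℓ a b)
    (hd : ∀ ε : ℝ, 0 < ε → p + ε • d ∉ tri ℓ a b) : p ∈ frontier (tri ℓ a b) := by
  rw [(isClosed_tri ℓ a b).frontier_eq]
  refine ⟨hp, fun hi => ?_⟩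
  have hc : ContinuousAt (fun ε : ℝ => p + ε • d) 0 := by fun_prop
  have hev : ∀ᶠ ε : ℝ in nhds 0, p + ε • d ∈ tri ℓ a b :=
    hc.eventually (by simpa using mem_interior_iff_mem_nhds.1 hi)
  obtain ⟨ε, hε, h⟩ := (hev.filter_mono nhdsWithin_le_nhds).and
    (self_mem_nhdsWithin (a := (0 : ℝ)) (s := Set.Ioi 0)) |>.exists
  exact hd ε h hε

theorem pd_clm_comp {w : ℝ × ℝ × ℝ → ℂ} (hw : Differentiable ℝ w) (φ : ℂ →L[ℝ] ℝ)
    (v : ℝ × ℝ × ℝ) : pd v (fun q => φ (w q)) = fun q => φ (pd v w q) := by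
  ext q
  unfold pd
  rw [show fderiv ℝ (fun q => φ (w q)) q = _ from
    (φ.hasFDerivAt.comp q (hw q).hasFDerivAt).fderiv]
  rfl

/-- Real-linear images, such as the real and the imaginary part, of a complex solution are solutions. -/
theorem isDirichletWave_clm_comp {ℓ a b : ℝ} (hℓ : 0 < ℓ) (hab : a < b) {w : ℝ × ℝ × ℝ → ℂ}
    (hw : ContDiff ℝ (⊤ : ℕ∞) w)
    (hwave : ∀ t, ∀ p ∈ tri ℓ a b, pd (1, 0, 0) (pd (1, 0, 0) w) (t, p)
      = pd (0, 1, 0) (pd (0, 1, 0) w) (t, p) + pd (0, 0, 1) (pd (0, 0, 1) w) (t, p))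
    (hbc : ∀ t, ∀ p ∈ frontier (tri ℓ a b), w (t, p) = 0) (φ : ℂ →L[ℝ] ℝ) :
    IsDirichletWave ℓ a b (fun q => φ (w q)) where
  smooth := φ.contDiff.comp hw
  wave t p hp := by
    have h2 : ∀ v, pd v (pd v fun q => φ (w q)) = fun q => φ (pd v (pd v w) q) := fun v => by
      rw [pd_clm_comp (hw.differentiable (by simp)),
        pd_clm_comp ((contDiff_pd hw v).differentiable (by simp))]
    simp only [h2, hwave t p hp, map_add]
  lower t x hx := by
    rw [hbc t (x, a * x), map_zero]
    refine mem_frontier_tri (d := (0, -1))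
      ⟨hx.1, hx.2, le_rfl, mul_le_mul_of_nonneg_right hab.le hx.1⟩ fun ε hε h => ?_
    have := h.2.2.1
    simp at this
    linarith
  upper t x hx := by
    rw [hbc t (x, b * x), map_zero]
    refine mem_frontier_tri (d := (0, 1))
      ⟨hx.1, hx.2, mul_le_mul_of_nonneg_right hab.le hx.1, le_rfl⟩ fun ε hε h => ?_
    have := h.2.2.2
    simp at this
    linarith
  side t y hy := by
    rw [hbc t (ℓ, y), map_zero]
    refine mem_frontier_tri (d := (1, 0)) ⟨hℓ.le, le_rfl, hy.1, hy.2⟩ fun ε hε h => ?_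
    have := h.2.1
    simp at this
    linarith

theorem sq_norm_eq (z : ℂ) : ‖z‖ ^ 2 = Complex.reCLM z ^ 2 + Complex.imCLM z ^ 2 := by
  rw [Complex.sq_norm, Complex.normSq_apply]
  simp
  ring

/-- Main theorem (acute triangle setup): boundary observability asymptotic on
the side `A = {ℓ} × [−a₁, a₂]` of the triangle with vertices `(0,0)`,
`(ℓ,−a₁)`, `(ℓ,a₂)`, for smooth solutions of the wave equation with Dirichlet
boundary conditions:
`|∫₀^T ∫_A |∂_ν u|² dS dt − (T/ℓ) E(0)| ≤ (2√2 + √(e−1)) (L/ℓ) E(0)`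
for all `T > 0`, where `L` is the length of the longest side. -/
theorem observability_triangle
    (ℓ a₁ a₂ : ℝ) (hℓ : 0 < ℓ) (ha₁ : 0 < a₁) (ha₂ : 0 < a₂)
    (Ω : Set (ℝ × ℝ))
    (hΩ : Ω = {p : ℝ × ℝ | 0 ≤ p.1 ∧ p.1 ≤ ℓ ∧
      -(a₁ / ℓ) * p.1 ≤ p.2 ∧ p.2 ≤ (a₂ / ℓ) * p.1})
    (L : ℝ)
    (hL : L = max (max (Real.sqrt (ℓ^2 + a₁^2)) (Real.sqrt (ℓ^2 + a₂^2)))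
      (a₁ + a₂))
    (u : ℝ → ℝ × ℝ → ℂ)
    (hu : ContDiff ℝ (⊤ : ℕ∞) (fun q : ℝ × ℝ × ℝ => u q.1 q.2))
    (hwave : ∀ t, ∀ p ∈ Ω,
      deriv (fun s => deriv (fun s' => u s' p) s) t
        = deriv (fun x => deriv (fun x' => u t (x', p.2)) x) p.1
          + deriv (fun y => deriv (fun y' => u t (p.1, y')) y) p.2)
    (hbc : ∀ t, ∀ p ∈ frontier Ω, u t p = 0)
    (E0 : ℝ)
    (hE0 : E0 = ∫ p in Ω, ‖deriv (fun s => u s p) 0‖^2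
      + ‖deriv (fun x => u 0 (x, p.2)) p.1‖^2
      + ‖deriv (fun y => u 0 (p.1, y)) p.2‖^2) :
    ∀ T > 0,
      |(∫ t in (0:ℝ)..T, ∫ y in (-a₁)..a₂,
          ‖deriv (fun x => u t (x, y)) ℓ‖^2) - (T / ℓ) * E0|
        ≤ (2 * Real.sqrt 2 + Real.sqrt (Real.exp 1 - 1)) * (L / ℓ) * E0 := by
  intro T _
  set a : ℝ := -(a₁ / ℓ) with ha
  set b : ℝ := a₂ / ℓ with hb
  have haℓ : a * ℓ = -a₁ := by rw [ha]; field_simp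
  have hbℓ : b * ℓ = a₂ := by rw [hb]; field_simp
  have hab : a < b := by
    have h1 : 0 < a₁ / ℓ := by positivity
    have h2 : 0 < a₂ / ℓ := by positivity
    rw [ha, hb]; linarith
  have hΩ' : Ω = tri ℓ a b := hΩ
  clear hΩ
  subst hΩ'
  have hL1 : Real.sqrt (ℓ ^ 2 + a₁ ^ 2) ≤ L := hL ▸ (le_max_left _ _).trans (le_max_left _ _)
  have hL2 : Real.sqrt (ℓ ^ 2 + a₂ ^ 2) ≤ L := hL ▸ (le_max_right _ _).trans (le_max_left _ _)
  have hLpos : 0 < L := lt_of_lt_of_le (Real.sqrt_pos.2 (by positivity)) hL1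
  rw [Real.sqrt_le_left hLpos.le] at hL1 hL2
  have hLtri : ∀ p ∈ tri ℓ a b, p.1 ^ 2 + p.2 ^ 2 ≤ L ^ 2 := by
    rintro ⟨x, y⟩ ⟨h1, h2, h3, h4⟩
    simp only at h1 h2 h3 h4 ⊢
    have hx : x ^ 2 ≤ ℓ ^ 2 := pow_le_pow_left₀ h1 h2 2
    have ha0 : a ≤ 0 := by rw [ha]; exact neg_nonpos.2 (by positivity)
    have hb0 : 0 ≤ b := by rw [hb]; positivity
    rcases le_total 0 y with hy | hy
    · have : y ≤ a₂ := by nlinarith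
      nlinarith
    · have : -a₁ ≤ y := by nlinarith
      nlinarith
  set w : ℝ × ℝ × ℝ → ℂ := fun q => u q.1 q.2 with hwdef
  have hd : Differentiable ℝ w := hu.differentiable (by simp)
  have hdd : ∀ v, Differentiable ℝ (pd v w) := fun v =>
    (contDiff_pd hu v).differentiable (by simp)
  have ct : ∀ (t : ℝ) (p : ℝ × ℝ), HasDerivAt (fun s : ℝ => (s, p)) (1, 0, 0) t := fun t p =>
    (hasDerivAt_id t).prodMk (hasDerivAt_const t p)
  have cx : ∀ t x y : ℝ, HasDerivAt (fun s : ℝ => (t, s, y)) (0, 1, 0) x := fun t x y =>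
    (hasDerivAt_const x t).prodMk ((hasDerivAt_id x).prodMk (hasDerivAt_const x y))
  have cy : ∀ t x y : ℝ, HasDerivAt (fun s : ℝ => (t, x, s)) (0, 0, 1) y := fun t x y =>
    (hasDerivAt_const y t).prodMk ((hasDerivAt_const y x).prodMk (hasDerivAt_id y))
  have et : ∀ t p, deriv (fun s => u s p) t = pd (1, 0, 0) w (t, p) := fun t p =>
    deriv_comp_eq_pd hd (ct t p)
  have ex : ∀ t x y, deriv (fun s => u t (s, y)) x = pd (0, 1, 0) w (t, x, y) := fun t x y =>
    deriv_comp_eq_pd hd (cx t x y)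
  have ey : ∀ t x y, deriv (fun s => u t (x, s)) y = pd (0, 0, 1) w (t, x, y) := fun t x y =>
    deriv_comp_eq_pd hd (cy t x y)
  have hwave' : ∀ t, ∀ p ∈ tri ℓ a b, pd (1, 0, 0) (pd (1, 0, 0) w) (t, p)
      = pd (0, 1, 0) (pd (0, 1, 0) w) (t, p) + pd (0, 0, 1) (pd (0, 0, 1) w) (t, p) := by
    intro t p hp
    have := hwave t p hp
    simp only [et, ex, ey] at this
    rwa [deriv_comp_eq_pd (hdd _) (ct t p), deriv_comp_eq_pd (hdd _) (cx t p.1 p.2),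
      deriv_comp_eq_pd (hdd _) (cy t p.1 p.2)] at this
  have hR := isDirichletWave_clm_comp hℓ hab hu hwave' hbc Complex.reCLM
  have hI := isDirichletWave_clm_comp hℓ hab hu hwave' hbc Complex.imCLM
  have oR := hR.observability hℓ hab hLpos hLtri T
  have oI := hI.observability hℓ hab hLpos hLtri T
  have hce : ∀ {U : ℝ × ℝ × ℝ → ℝ}, IsDirichletWave ℓ a b U → Continuous (energyDensity U) := by
    intro U h
    have c0 := (h.contDiff_pd_one (1, 0, 0)).continuous
    have c1 := (h.contDiff_pd_one (0, 1, 0)).continuous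
    have c2 := (h.contDiff_pd_one (0, 0, 1)).continuous
    unfold energyDensity; fun_prop
  have hE : E0 = (∫ p in tri ℓ a b, energyDensity (fun q => Complex.reCLM (w q)) (0, p))
      + ∫ p in tri ℓ a b, energyDensity (fun q => Complex.imCLM (w q)) (0, p) := by
    have := hce hR
    have := hce hI
    rw [hE0, ← integral_add (integrableOn_tri (by fun_prop)) (integrableOn_tri (by fun_prop))]
    refine integral_congr_ae (ae_of_all _ fun p => ?_)
    simp only [et, ex, ey, sq_norm_eq, energyDensity, pd_clm_comp hd]
    ring
  have hcx := (hdd (0, 1, 0)).continuous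
  have hB : (∫ t in (0:ℝ)..T, ∫ y in (-a₁)..a₂, ‖deriv (fun x => u t (x, y)) ℓ‖ ^ 2)
      = (∫ t in (0 : ℝ)..T, ∫ y in (a * ℓ)..(b * ℓ),
          pd (0, 1, 0) (fun q => Complex.reCLM (w q)) (t, ℓ, y) ^ 2)
        + ∫ t in (0 : ℝ)..T, ∫ y in (a * ℓ)..(b * ℓ),
          pd (0, 1, 0) (fun q => Complex.imCLM (w q)) (t, ℓ, y) ^ 2 := by
    simp only [pd_clm_comp hd, ex, haℓ, hbℓ]
    rw [← intervalIntegral.integral_add]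
    · refine intervalIntegral.integral_congr fun t _ => ?_
      rw [← intervalIntegral.integral_add]
      · simp only [sq_norm_eq]
      all_goals exact Continuous.intervalIntegrable (by fun_prop) _ _
    all_goals
      apply Continuous.intervalIntegrable
      exact intervalIntegral.continuous_parametric_intervalIntegral_of_continuous'
        (by fun_prop) _ _
  have hE0nn : 0 ≤ E0 := by
    rw [hE0]
    exact integral_nonneg fun p => by positivity
  have hconst : 2 ≤ 2 * Real.sqrt 2 + Real.sqrt (Real.exp 1 - 1) := by
    have h1 : 1 ≤ Real.sqrt 2 := Real.one_le_sqrt.2 (by norm_num)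
    have h2 := Real.sqrt_nonneg (Real.exp 1 - 1)
    linarith
  rw [hB]
  refine le_trans ?_ (mul_le_mul_of_nonneg_right
    (mul_le_mul_of_nonneg_right hconst (by positivity : 0 ≤ L / ℓ)) hE0nn)
  rw [hE, mul_add, mul_add, add_sub_add_comm]
  exact (abs_add_le _ _).trans (add_le_add oR oI)
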